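/- Let λ ∈ G = ℂ \ (σ(T₁) ∪ σ(T₂)). The homogeneous integral equation f − (1/λ²)·W₁(1/λ)f = 0 has a nontrivial solution f ∈ H, f ≠ 0, if and only if Δ(λ) = 0. -/

import Mathlib

open MeasureTheory Complex

noncomputable section

/-- The measure on `ℝ` given by restricting Lebesgue measure to `[a,b]`. -/
abbrev muI (a b : ℝ) : MeasureTheory.Measure ℝ :=
  MeasureTheory.volume.restrict (Set.Icc a b)

/-!
In terms of tensors, `T₁ = ∑ₖ |φₖ⟩⟨φₖ| ⊗ hₖ` and `T₂ = ∑ⱼ pⱼ ⊗ |ψⱼ⟩⟨ψⱼ|`. As the `φₖ` are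
orthonormal, the subspace `φₖ ⊗ L²[c, d]` reduces `T₁`, which acts on it as multiplication by `hₖ`;
so `σ(hₖ) ⊆ σ(T₁)` and `S₁(1/λ) = λ ∑ₖ |φₖ⟩⟨φₖ| ⊗ hₖ (λ - hₖ)⁻¹`. Hence `S₁ T₂` has finite rank:
`S₁ T₂ f = λ ∑_ω β_ω(f) φⱼ ⊗ hⱼ (λ - hⱼ)⁻¹ ψₖ`, where `ω = (k, j)` and `β_ω` is integration against
`B_ω`. In the same way `λ (λ - T₂)⁻¹ = 1 + ∑ᵢ pᵢ (λ - pᵢ)⁻¹ ⊗ |ψᵢ⟩⟨ψᵢ|`, and this operator turns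
`φⱼ ⊗ hⱼ (λ - hⱼ)⁻¹ ψₖ` into `F_ω`. Therefore `W₁ f = λ ∑_ω β_ω(f) F_ω`, and `f = λ⁻² W₁ f` says
that `λ f = ∑_ω β_ω(f) F_ω`, which has a nonzero solution iff the matrix `β_ω'(F_ω) - λ δ_ωω'` is
singular. The division by `λ` is legitimate: a function `u ≠ 0` orthogonal to all `φₖ` exists
because `L²[a, b]` is infinite-dimensional, and `T₁ (u ⊗ v) = 0`, so `0 ∈ σ(T₁)`.
-/

open scoped InnerProduct InnerProductSpace ENNReal

section FiniteRank

theorem exists_ne_zero_smul_eq_sum_smul_iff_det_eq_zero {K E Γ : Type*} [Field K] [AddCommGroup E]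
    [Module K E] [Fintype Γ] [DecidableEq Γ] {c : K} (hc : c ≠ 0) (β : Γ → E →ₗ[K] K) (F : Γ → E) :
    (∃ f : E, f ≠ 0 ∧ c • f = ∑ ω, β ω f • F ω) ↔
      Matrix.det (Matrix.of fun ω ω' => β ω' (F ω) - if ω = ω' then c else 0) = 0 := by
  rw [← Matrix.exists_vecMul_eq_zero_iff]
  have vecMul_eq_zero_iff (x : Γ → K) :
      Matrix.vecMul x (Matrix.of fun ω ω' => β ω' (F ω) - if ω = ω' then c else 0) = 0 ↔
        ∀ ω', β ω' (∑ ω, x ω • F ω) = c * x ω' := by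
    simp [funext_iff, Matrix.vecMul, dotProduct, mul_sub, sub_eq_zero, mul_comm]
  simp_rw [vecMul_eq_zero_iff]
  constructor
  · rintro ⟨f, hf, hfF⟩
    refine ⟨fun ω => β ω f, fun hβ => ?_, fun ω' => by simp [← hfF]⟩
    have : c • f = 0 := by simp [hfF, congrFun hβ]
    exact (smul_ne_zero hc hf) this
  · rintro ⟨x, hx, hxF⟩
    refine ⟨∑ ω, x ω • F ω, fun hsum => hx (funext fun ω => ?_), ?_⟩
    · simpa [hsum, hc] using hxF ω
    · simp_rw [hxF, Finset.smul_sum, smul_smul]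

end FiniteRank

section Spectrum

variable {𝕜 E F : Type*} [NontriviallyNormedField 𝕜] [NormedAddCommGroup E] [NormedSpace 𝕜 E]
  [NormedAddCommGroup F] [NormedSpace 𝕜 F] {T : E →L[𝕜] E} {lam : 𝕜}

theorem eq_resolvent_apply_iff (hlam : lam ∉ spectrum 𝕜 T) {f g : E} :
    f = resolvent T lam g ↔ lam • f - T f = g := by
  rw [spectrum.notMem_iff] at hlam
  constructor
  · rintro rfl
    simpa [resolvent, Algebra.algebraMap_eq_smul_one] using
      congr($(Ring.mul_inverse_cancel _ hlam) g)
  · rintro rfl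
    simpa [resolvent, Algebra.algebraMap_eq_smul_one, eq_comm] using
      congr($(Ring.inverse_mul_cancel _ hlam) f)

theorem spectrum_subset_of_intertwines {A : F →L[𝕜] F} {V : F →L[𝕜] E} {V' : E →L[𝕜] F}
    (hV : V' ∘L V = 1) (hTV : T ∘L V = V ∘L A) (hV'T : V' ∘L T = A ∘L V') :
    spectrum 𝕜 A ⊆ spectrum 𝕜 T := by
  refine fun lam => not_imp_not.1 fun hlam => ?_
  have hV_apply (v : F) : V' (V v) = v := congr($hV v)
  have hTV_apply (v : F) : T (V v) = V (A v) := congr($hTV v)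
  have hV'T_apply (f : E) : V' (T f) = A (V' f) := congr($hV'T f)
  refine fun hA => hA (spectrum.mem_resolventSet_of_left_right_inverse
    (b := V' ∘L resolvent T lam ∘L V) (c := V' ∘L resolvent T lam ∘L V) ?_ ?_) <;> ext v
  · simpa [Algebra.algebraMap_eq_smul_one, hV'T_apply, hV_apply] using
      congr(V' $((eq_resolvent_apply_iff hlam (g := V v)).1 rfl))
  · simpa [Algebra.algebraMap_eq_smul_one, hTV_apply, hV_apply, eq_comm] using
      congr(V' $((eq_resolvent_apply_iff hlam (f := V v)).2 rfl))

end Spectrum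

section InnerTensor

variable {𝕜 H₁ H₂ H ι κ : Type*} [RCLike 𝕜] [NormedAddCommGroup H₁] [InnerProductSpace 𝕜 H₁]
  [NormedAddCommGroup H₂] [InnerProductSpace 𝕜 H₂] [NormedAddCommGroup H] [InnerProductSpace 𝕜 H]
  {t : H₁ →L[𝕜] H₂ →L[𝕜] H}

/-- A bounded bilinear map `t` under which inner products multiply, so that `t u v` plays the role
of the elementary tensor `u ⊗ v`. Its values are not required to span a dense subspace of `H`. -/
def IsInnerTensor (t : H₁ →L[𝕜] H₂ →L[𝕜] H) : Prop :=
  ∀ u v u' v', ⟪t u v, t u' v'⟫_𝕜 = ⟪u, u'⟫_𝕜 * ⟪v, v'⟫_𝕜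

namespace IsInnerTensor

theorem flip (ht : IsInnerTensor t) : IsInnerTensor t.flip := fun u v u' v' => by
  simp [ht v u v' u', mul_comm]

theorem apply_ne_zero (ht : IsInnerTensor t) {u : H₁} {v : H₂} (hu : u ≠ 0) (hv : v ≠ 0) :
    t u v ≠ 0 := by
  rw [← inner_self_ne_zero (𝕜 := 𝕜), ht]
  exact mul_ne_zero (inner_self_ne_zero.2 hu) (inner_self_ne_zero.2 hv)

theorem adjoint_apply [CompleteSpace H₂] [CompleteSpace H] (ht : IsInnerTensor t)
    (u u' : H₁) (v : H₂) : ((t u)†) (t u' v) = ⟪u, u'⟫_𝕜 • v :=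
  ext_inner_left 𝕜 fun w => by
    rw [ContinuousLinearMap.adjoint_inner_right, ht, inner_smul_right]

end IsInnerTensor

variable [Fintype ι] [CompleteSpace H₂] [CompleteSpace H] {e : ι → H₁}

/-- The operator `∑ₖ |eₖ⟩⟨eₖ| ⊗ Aₖ` on `H`, acting through the slices `(t (e k))† f` of `f`. The
partial integral operators `T₁` and `T₂` are of this form, for `t = tensorLp` and its `flip`, with
multiplication operators `Aₖ`. -/
def partialOp (t : H₁ →L[𝕜] H₂ →L[𝕜] H) (e : ι → H₁) (A : ι → H₂ →L[𝕜] H₂) : H →L[𝕜] H :=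
  ∑ k, t (e k) ∘L A k ∘L (t (e k))†

theorem partialOp_apply (t : H₁ →L[𝕜] H₂ →L[𝕜] H) (e : ι → H₁) (A : ι → H₂ →L[𝕜] H₂) (f : H) :
    partialOp t e A f = ∑ k, t (e k) (A k (((t (e k))†) f)) := by
  simp [partialOp]

namespace IsInnerTensor

theorem partialOp_tensor (ht : IsInnerTensor t) (A : ι → H₂ →L[𝕜] H₂) (u : H₁) (v : H₂) :
    partialOp t e A (t u v) = ∑ k, ⟪e k, u⟫_𝕜 • t (e k) (A k v) := by
  simp [partialOp_apply, ht.adjoint_apply]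

theorem adjoint_partialOp_apply (ht : IsInnerTensor t) (he : Orthonormal 𝕜 e)
    (A : ι → H₂ →L[𝕜] H₂) (k : ι) (f : H) :
    ((t (e k))†) (partialOp t e A f) = A k (((t (e k))†) f) := by
  classical
  simp [partialOp_apply, ht.adjoint_apply, orthonormal_iff_ite.1 he]

theorem spectrum_subset_spectrum_partialOp (ht : IsInnerTensor t) (he : Orthonormal 𝕜 e)
    (A : ι → H₂ →L[𝕜] H₂) (k : ι) : spectrum 𝕜 (A k) ⊆ spectrum 𝕜 (partialOp t e A) := by
  classical
  refine spectrum_subset_of_intertwines (V := t (e k)) (V' := (t (e k))†) ?_ ?_ ?_ <;> ext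
  · simp [ht.adjoint_apply, inner_self_eq_norm_sq_to_K, he.norm_eq_one]
  · simp [ht.partialOp_tensor, orthonormal_iff_ite.1 he]
  · simp [ht.adjoint_partialOp_apply he]

theorem zero_mem_spectrum_partialOp [Nontrivial H₂] (ht : IsInnerTensor t)
    (hH₁ : ¬ FiniteDimensional 𝕜 H₁) (A : ι → H₂ →L[𝕜] H₂) :
    0 ∈ spectrum 𝕜 (partialOp t e A) := by
  obtain ⟨u, hu, hu0⟩ : ∃ u ∈ (Submodule.span 𝕜 (Set.range e))ᗮ, u ≠ 0 := by
    have hfin := Set.finite_range e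
    have : FiniteDimensional 𝕜 (Submodule.span 𝕜 (Set.range e)) := .span_of_finite 𝕜 hfin
    refine Submodule.exists_mem_ne_zero_of_ne_bot fun hbot => hH₁ (Module.finite_def.2 ?_)
    exact Submodule.orthogonal_eq_bot_iff.1 hbot ▸ Submodule.fg_span hfin
  obtain ⟨v, hv⟩ := exists_ne (0 : H₂)
  have hker : partialOp t e A (t u v) = 0 := by
    have heu (k : ι) : ⟪e k, u⟫_𝕜 = 0 := hu _ (Submodule.subset_span ⟨k, rfl⟩)
    simp [ht.partialOp_tensor, heu]
  by_contra h0
  refine ht.apply_ne_zero hu0 hv ?_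
  simpa [hker] using (eq_resolvent_apply_iff h0 (f := t u v)).2 rfl

theorem smul_resolvent_partialOp_apply (ht : IsInnerTensor t) (he : Orthonormal 𝕜 e)
    {A : ι → H₂ →L[𝕜] H₂} {lam : 𝕜} (hlam : lam ∉ spectrum 𝕜 (partialOp t e A)) (f : H) :
    lam • resolvent (partialOp t e A) lam f =
      f + partialOp t e (fun k => A k * resolvent (A k) lam) f := by
  have hA (k : ι) (g : H₂) : lam • A k (resolvent (A k) lam g) -
      A k (A k (resolvent (A k) lam g)) = A k g := by
    rw [← map_smul, ← map_sub]
    have hk := fun h => hlam (ht.spectrum_subset_spectrum_partialOp he A k h)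
    rw [(eq_resolvent_apply_iff hk).1 rfl]
  have hT : lam • partialOp t e (fun k => A k * resolvent (A k) lam) f -
      partialOp t e A (partialOp t e (fun k => A k * resolvent (A k) lam) f) =
        partialOp t e A f := by
    rw [partialOp_apply t e A (partialOp t e _ f)]
    simp_rw [ht.adjoint_partialOp_apply he, partialOp_apply, Finset.smul_sum,
      ← Finset.sum_sub_distrib, ← map_smul, ← map_sub, ContinuousLinearMap.mul_def,
      ContinuousLinearMap.comp_apply, map_smul, hA]
  rw [← map_smul, eq_comm, eq_resolvent_apply_iff hlam, map_add, smul_add, add_sub_add_comm, hT,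
    sub_add_cancel]

end IsInnerTensor

variable [Fintype κ] [CompleteSpace H₁] {φ : ι → H₁} {ψ : κ → H₂}

/-- The functional `f ↦ ⟪φⱼ ⊗ ψₖ, (Cₖ ⊗ 1) f⟫` for `ω = (k, j)`. On `L²`, with `Cₖ` the
multiplication by `pₖ`, it is the integral of `f` against `B_ω`. -/
def sliceFunctional (t : H₁ →L[𝕜] H₂ →L[𝕜] H) (φ : ι → H₁) (ψ : κ → H₂) (C : κ → H₁ →L[𝕜] H₁)
    (ω : κ × ι) : H →L[𝕜] 𝕜 :=
  innerSL 𝕜 (φ ω.2) ∘L C ω.1 ∘L (t.flip (ψ ω.1))†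

theorem IsInnerTensor.partialOp_partialOp_flip (ht : IsInnerTensor t) (D : ι → H₂ →L[𝕜] H₂)
    (C : κ → H₁ →L[𝕜] H₁) (f : H) :
    partialOp t φ D (partialOp t.flip ψ C f) =
      ∑ ω, sliceFunctional t φ ψ C ω f • t (φ ω.2) (D ω.2 (ψ ω.1)) := by
  simp [partialOp_apply t.flip, ht.partialOp_tensor, sliceFunctional, Fintype.sum_prod_type]

theorem exists_ne_zero_sub_eq_zero_iff_det_eq_zero [DecidableEq ι] [DecidableEq κ]
    (ht : IsInnerTensor t) {lam : 𝕜} (hlam0 : lam ≠ 0) {D : ι → H₂ →L[𝕜] H₂} {C : κ → H₁ →L[𝕜] H₁}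
    (hlam : lam ∉ spectrum 𝕜 (partialOp t.flip ψ C)) {W : H →L[𝕜] H}
    (hW : (1 - lam⁻¹ • partialOp t.flip ψ C) * W = lam • (partialOp t φ D * partialOp t.flip ψ C)) :
    (∃ f : H, f ≠ 0 ∧ f - (lam ^ 2)⁻¹ • W f = 0) ↔
      Matrix.det (Matrix.of fun ω ω' : κ × ι =>
        sliceFunctional t φ ψ C ω'
          (lam • resolvent (partialOp t.flip ψ C) lam (t (φ ω.2) (D ω.2 (ψ ω.1)))) -
        if ω = ω' then lam else 0) = 0 := by
  set T₂ := partialOp t.flip ψ C with hT₂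
  have hW_apply (f : H) : W f = lam • ∑ ω, sliceFunctional t φ ψ C ω f •
      lam • resolvent T₂ lam (t (φ ω.2) (D ω.2 (ψ ω.1))) := by
    have hWf : lam • W f - T₂ (W f) = lam ^ 2 • partialOp t φ D (T₂ f) := by
      simpa [smul_sub, smul_smul, hlam0, sq] using congr(lam • $hW f)
    rw [(eq_resolvent_apply_iff hlam).2 hWf, hT₂, ht.partialOp_partialOp_flip]
    simp [Finset.smul_sum, smul_smul, mul_comm, mul_assoc, sq]
  refine Iff.trans (exists_congr fun f => and_congr_right fun _ => ?_)
    (exists_ne_zero_smul_eq_sum_smul_iff_det_eq_zero hlam0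
      (fun ω => (sliceFunctional t φ ψ C ω).toLinearMap)
      fun ω => lam • resolvent T₂ lam (t (φ ω.2) (D ω.2 (ψ ω.1))))
  rw [sub_eq_zero, eq_inv_smul_iff₀ (pow_ne_zero 2 hlam0), hW_apply, sq, mul_smul,
    smul_right_inj hlam0]
  rfl

end InnerTensor

section TensorLp

variable {𝕜 X Y : Type*} [RCLike 𝕜] {mX : MeasurableSpace X} {mY : MeasurableSpace Y}
  {μ : Measure X} {ν : Measure Y}

theorem memLp_two_mul_prod {u : X → 𝕜} {v : Y → 𝕜} (hu : MemLp u 2 μ) (hv : MemLp v 2 ν) :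
    MemLp (fun z : X × Y => u z.1 * v z.2) 2 (μ.prod ν) := by
  refine (memLp_two_iff_integrable_sq_norm (hu.1.comp_fst.mul hv.1.comp_snd)).2 ?_
  simpa [mul_pow] using ((memLp_two_iff_integrable_sq_norm hu.1).1 hu).mul_prod
    ((memLp_two_iff_integrable_sq_norm hv.1).1 hv)

variable [SFinite μ] [SFinite ν]

theorem inner_toLp_mul_prod (u u' : Lp 𝕜 2 μ) (v v' : Lp 𝕜 2 ν) :
    ⟪(memLp_two_mul_prod (Lp.memLp u) (Lp.memLp v)).toLp,
      (memLp_two_mul_prod (Lp.memLp u') (Lp.memLp v')).toLp⟫_𝕜 = ⟪u, u'⟫_𝕜 * ⟪v, v'⟫_𝕜 := by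
  simp_rw [L2.inner_def, ← integral_prod_mul]
  refine integral_congr_ae ?_
  filter_upwards [(memLp_two_mul_prod (Lp.memLp u) (Lp.memLp v)).coeFn_toLp,
    (memLp_two_mul_prod (Lp.memLp u') (Lp.memLp v')).coeFn_toLp] with z hz hz'
  simp only [hz, hz', RCLike.inner_apply, map_mul]
  ring

theorem norm_toLp_mul_prod (u : Lp 𝕜 2 μ) (v : Lp 𝕜 2 ν) :
    ‖(memLp_two_mul_prod (Lp.memLp u) (Lp.memLp v)).toLp‖ = ‖u‖ * ‖v‖ := by
  rw [← sq_eq_sq₀ (norm_nonneg _) (by positivity), mul_pow]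
  have h := inner_toLp_mul_prod u u v v
  simp only [inner_self_eq_norm_sq_to_K] at h
  exact_mod_cast h

variable (𝕜 μ ν) in
/-- The bilinear map `(u, v) ↦ u ⊗ v`, where `(u ⊗ v)(x, y) = u x * v y`, on `L²` functions. -/
def tensorLp : Lp 𝕜 2 μ →L[𝕜] Lp 𝕜 2 ν →L[𝕜] Lp 𝕜 2 (μ.prod ν) :=
  LinearMap.mkContinuous₂
    (LinearMap.mk₂ 𝕜 (fun u v => (memLp_two_mul_prod (Lp.memLp u) (Lp.memLp v)).toLp)
      (fun u u' v => by
        rw [← MemLp.toLp_add, MemLp.toLp_eq_toLp_iff]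
        filter_upwards [Measure.quasiMeasurePreserving_fst.ae (Lp.coeFn_add u u')] with z hz
        simp only [hz, Pi.add_apply, add_mul])
      (fun c u v => by
        rw [← MemLp.toLp_const_smul, MemLp.toLp_eq_toLp_iff]
        filter_upwards [Measure.quasiMeasurePreserving_fst.ae (Lp.coeFn_smul c u)] with z hz
        simp [hz, mul_assoc])
      (fun u v v' => by
        rw [← MemLp.toLp_add, MemLp.toLp_eq_toLp_iff]
        filter_upwards [Measure.quasiMeasurePreserving_snd.ae (Lp.coeFn_add v v')] with z hz
        simp only [hz, Pi.add_apply, mul_add])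
      (fun c u v => by
        rw [← MemLp.toLp_const_smul, MemLp.toLp_eq_toLp_iff]
        filter_upwards [Measure.quasiMeasurePreserving_snd.ae (Lp.coeFn_smul c v)] with z hz
        simp [hz, mul_left_comm]))
    1 fun u v => by rw [one_mul]; exact (norm_toLp_mul_prod u v).le

theorem coeFn_tensorLp (u : Lp 𝕜 2 μ) (v : Lp 𝕜 2 ν) :
    tensorLp 𝕜 μ ν u v =ᵐ[μ.prod ν] fun z => u z.1 * v z.2 :=
  (memLp_two_mul_prod (Lp.memLp u) (Lp.memLp v)).coeFn_toLp

theorem isInnerTensor_tensorLp : IsInnerTensor (tensorLp 𝕜 μ ν) :=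
  fun u v u' v' => inner_toLp_mul_prod u u' v v'

end TensorLp

section Adjoint

theorem ae_eq_of_forall_inner_eq_integral {𝕜 X : Type*} [RCLike 𝕜] {mX : MeasurableSpace X}
    {μ : Measure X} [SigmaFinite μ] {A : Lp 𝕜 2 μ} {g : X → 𝕜}
    (hg : ∀ v : Lp 𝕜 2 μ, Integrable (fun x => star (v x) * g x) μ)
    (hA : ∀ v : Lp 𝕜 2 μ, ⟪v, A⟫_𝕜 = ∫ x, star (v x) * g x ∂μ) : A =ᵐ[μ] g := by
  have hindicator {s : Set X} (hs : MeasurableSet s) (hμs : μ s < ∞) :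
      (fun x => star (indicatorConstLp 2 hs hμs.ne (1 : 𝕜) x) * g x) =ᵐ[μ] s.indicator g := by
    filter_upwards [indicatorConstLp_coeFn (p := 2) (hs := hs) (hμs := hμs.ne) (c := (1 : 𝕜))]
      with x hx
    by_cases hxs : x ∈ s <;> simp [hx, hxs]
  refine ae_eq_of_forall_setIntegral_eq_of_sigmaFinite
    (fun s _ hμs => integrableOn_Lp_of_measure_ne_top A (by simp) hμs.ne)
    (fun s hs hμs => ?_) fun s hs hμs => ?_
  · rw [← integrable_indicator_iff hs]
    exact (hg _).congr (hindicator hs hμs)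
  · rw [← L2.inner_indicatorConstLp_one hs hμs.ne, hA, ← integral_indicator hs]
    exact integral_congr_ae (hindicator hs hμs)

variable {𝕜 X Y : Type*} [RCLike 𝕜] {mX : MeasurableSpace X} {mY : MeasurableSpace Y}
  {μ : Measure X} {ν : Measure Y}

theorem integrable_star_tensorLp_mul [SFinite μ] [SFinite ν] (u : Lp 𝕜 2 μ) (v : Lp 𝕜 2 ν)
    (f : Lp 𝕜 2 (μ.prod ν)) :
    Integrable (fun z => star (u z.1) * star (v z.2) * f z) (μ.prod ν) := by
  refine (L2.integrable_inner (𝕜 := 𝕜) (tensorLp 𝕜 μ ν u v) f).congr ?_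
  filter_upwards [coeFn_tensorLp u v] with z hz
  simp [hz, mul_comm]

theorem inner_tensorLp [SFinite μ] [SFinite ν] (u : Lp 𝕜 2 μ) (v : Lp 𝕜 2 ν)
    (f : Lp 𝕜 2 (μ.prod ν)) :
    ⟪tensorLp 𝕜 μ ν u v, f⟫_𝕜 = ∫ z, star (u z.1) * star (v z.2) * f z ∂μ.prod ν := by
  rw [L2.inner_def]
  refine integral_congr_ae ?_
  filter_upwards [coeFn_tensorLp u v] with z hz
  simp [hz, mul_comm]

theorem coeFn_adjoint_tensorLp [SFinite μ] [SigmaFinite ν] (u : Lp 𝕜 2 μ)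
    (f : Lp 𝕜 2 (μ.prod ν)) :
    ((tensorLp 𝕜 μ ν u)†) f =ᵐ[ν] fun y => ∫ x, star (u x) * f (x, y) ∂μ := by
  have hslice (v : Lp 𝕜 2 ν) (y : Y) : ∫ x, star (u x) * star (v y) * f (x, y) ∂μ =
      star (v y) * ∫ x, star (u x) * f (x, y) ∂μ := by
    simp_rw [mul_assoc, mul_left_comm _ (star (v y)), integral_const_mul]
  refine ae_eq_of_forall_inner_eq_integral (fun v => ?_) fun v => ?_
  · simpa only [hslice] using (integrable_star_tensorLp_mul u v f).integral_prod_right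
  · rw [ContinuousLinearMap.adjoint_inner_right, inner_tensorLp,
      integral_prod_symm _ (integrable_star_tensorLp_mul u v f)]
    simp_rw [hslice]

theorem coeFn_adjoint_flip_tensorLp [SigmaFinite μ] [SFinite ν] (v : Lp 𝕜 2 ν)
    (f : Lp 𝕜 2 (μ.prod ν)) :
    (((tensorLp 𝕜 μ ν).flip v)†) f =ᵐ[μ] fun x => ∫ y, star (v y) * f (x, y) ∂ν := by
  have hslice (u : Lp 𝕜 2 μ) (x : X) : ∫ y, star (u x) * star (v y) * f (x, y) ∂ν =
      star (u x) * ∫ y, star (v y) * f (x, y) ∂ν := by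
    simp_rw [mul_assoc, integral_const_mul]
  refine ae_eq_of_forall_inner_eq_integral (fun u => ?_) fun u => ?_
  · simpa only [hslice] using (integrable_star_tensorLp_mul u v f).integral_prod_left
  · rw [ContinuousLinearMap.adjoint_inner_right, ContinuousLinearMap.flip_apply, inner_tensorLp,
      integral_prod _ (integrable_star_tensorLp_mul u v f)]
    simp_rw [hslice]

end Adjoint

section MulLp

variable {𝕜 X : Type*} [RCLike 𝕜] {mX : MeasurableSpace X} {μ : Measure X} {q : X → 𝕜}

/-- The operator of multiplication by an essentially bounded function `q` on `L²`. -/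
def mulLp (hq : MemLp q ∞ μ) : Lp 𝕜 2 μ →L[𝕜] Lp 𝕜 2 μ :=
  (ContinuousLinearMap.mul 𝕜 𝕜).holderL μ ∞ 2 2 hq.toLp

theorem coeFn_mulLp (hq : MemLp q ∞ μ) (u : Lp 𝕜 2 μ) : mulLp hq u =ᵐ[μ] fun x => q x * u x := by
  filter_upwards [(ContinuousLinearMap.mul 𝕜 𝕜).coeFn_holder (r := 2) hq.toLp u, hq.coeFn_toLp]
    with x hx hqx
  exact hx.trans (by rw [hqx, ContinuousLinearMap.mul_apply'])

variable {lam : 𝕜}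

theorem mulLp_indicatorConstLp_of_eqOn (hq : MemLp q ∞ μ) {s : Set X} (hs : MeasurableSet s)
    (hμs : μ s ≠ ∞) (hqs : ∀ᵐ x ∂μ, x ∈ s → q x = lam) :
    mulLp hq (indicatorConstLp 2 hs hμs 1) = lam • indicatorConstLp 2 hs hμs 1 := by
  apply Lp.ext
  filter_upwards [coeFn_mulLp hq (indicatorConstLp 2 hs hμs 1), hqs,
    indicatorConstLp_coeFn (p := 2) (hs := hs) (hμs := hμs) (c := (1 : 𝕜)),
    Lp.coeFn_smul lam (indicatorConstLp 2 hs hμs (1 : 𝕜))] with x hmul hqx hone hsmul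
  rw [hmul, hsmul, Pi.smul_apply, hone, smul_eq_mul]
  by_cases hxs : x ∈ s
  · rw [hqx hxs]
  · simp [hxs]

theorem ae_sub_ne_zero_of_notMem_spectrum_mulLp [SigmaFinite μ] (hq : MemLp q ∞ μ)
    (hlam : lam ∉ spectrum 𝕜 (mulLp hq)) : ∀ᵐ x ∂μ, lam - q x ≠ 0 := by
  obtain ⟨q', hq', hqq'⟩ := hq.1
  by_contra hne
  have hpos : 0 < μ {x | q' x = lam} := by
    refine pos_iff_ne_zero.2 fun h0 => hne ?_
    filter_upwards [hqq', measure_eq_zero_iff_ae_notMem.1 h0] with x hx hx'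
    rw [hx, sub_ne_zero, ne_comm]
    exact hx'
  obtain ⟨s, hs, hsub, hμs, hμs'⟩ :=
    Measure.exists_subset_measure_lt_top (hq'.measurable (measurableSet_singleton lam)) hpos
  have heigen := mulLp_indicatorConstLp_of_eqOn (lam := lam) hq hs hμs'.ne
    (hqq'.mono fun x hx hxs => hx.trans (hsub hxs))
  have hzero := (eq_resolvent_apply_iff hlam).2 (sub_eq_zero.2 heigen.symm)
  rw [map_zero, ← norm_eq_zero, norm_indicatorConstLp (by simp) (by simp)] at hzero
  simp [Measure.real, ENNReal.toReal_eq_zero_iff, hμs.ne', hμs'.ne] at hzero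

theorem coeFn_mulLp_mul_resolvent [SigmaFinite μ] (hq : MemLp q ∞ μ)
    (hlam : lam ∉ spectrum 𝕜 (mulLp hq)) (u : Lp 𝕜 2 μ) :
    (mulLp hq * resolvent (mulLp hq) lam) u =ᵐ[μ] fun x => q x / (lam - q x) * u x := by
  have hres := (eq_resolvent_apply_iff hlam (g := u)).1 rfl
  filter_upwards [ae_sub_ne_zero_of_notMem_spectrum_mulLp hq hlam,
    coeFn_mulLp hq (resolvent (mulLp hq) lam u), Lp.coeFn_smul lam (resolvent (mulLp hq) lam u),
    Lp.coeFn_sub (lam • resolvent (mulLp hq) lam u) (mulLp hq (resolvent (mulLp hq) lam u))]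
    with x hne hmul hsmul hsub
  rw [hres, Pi.sub_apply, hsmul, hmul, Pi.smul_apply, smul_eq_mul, ← sub_mul] at hsub
  rw [ContinuousLinearMap.mul_def, ContinuousLinearMap.comp_apply, hmul, hsub]
  field_simp

end MulLp

section Slices

variable {𝕜 X Y : Type*} [RCLike 𝕜] {mX : MeasurableSpace X} {mY : MeasurableSpace Y}
  {μ : Measure X} {ν : Measure Y}

theorem integral_sum_mul_star_mul {ι : Type*} [Fintype ι] {e : ι → X → 𝕜} {g : X → 𝕜}
    (he : ∀ k, MemLp (e k) 2 μ) (hg : MemLp g 2 μ) (c : ι → 𝕜) :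
    ∫ s, (∑ k, c k * star (e k s)) * g s ∂μ = ∑ k, c k * ∫ s, star (e k s) * g s ∂μ := by
  have hint (k : ι) : Integrable (fun s => star (e k s) * g s) μ := (he k).star.integrable_mul hg
  simp_rw [Finset.sum_mul, mul_assoc]
  rw [integral_finsetSum _ fun k _ => (hint k).const_mul (c k)]
  simp_rw [integral_const_mul]

variable [SFinite μ] [SFinite ν] {E : Type*} [NormedAddCommGroup E] {f : X × Y → E}

theorem ae_memLp_two_prodMk_left (hf : MemLp f 2 (μ.prod ν)) :
    ∀ᵐ x ∂μ, MemLp (fun y => f (x, y)) 2 ν := by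
  filter_upwards [hf.1.prodMk_left,
    ((memLp_two_iff_integrable_sq_norm hf.1).1 hf).prod_right_ae] with x hmeas hint
  exact (memLp_two_iff_integrable_sq_norm hmeas).2 hint

theorem ae_memLp_two_prodMk_right (hf : MemLp f 2 (μ.prod ν)) :
    ∀ᵐ y ∂ν, MemLp (fun x => f (x, y)) 2 μ :=
  ae_memLp_two_prodMk_left (hf.comp_measurePreserving Measure.measurePreserving_swap)

end Slices

section PartialIntegralOperator

variable {𝕜 X Y ι κ : Type*} [RCLike 𝕜] {mX : MeasurableSpace X} {mY : MeasurableSpace Y}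
  {μ : Measure X} {ν : Measure Y} [Fintype ι] [Fintype κ]
  {φ : ι → X → 𝕜} {ψ : κ → Y → 𝕜} {h : ι → Y → 𝕜} {p : κ → X → 𝕜}

theorem coeFn_partialOp_tensorLp [SFinite μ] [SigmaFinite ν] (hφ : ∀ k, MemLp (φ k) 2 μ)
    {D : ι → Lp 𝕜 2 ν →L[𝕜] Lp 𝕜 2 ν} (hD : ∀ k g, D k g =ᵐ[ν] fun y => h k y * g y)
    (f : Lp 𝕜 2 (μ.prod ν)) :
    partialOp (tensorLp 𝕜 μ ν) (fun k => (hφ k).toLp) D f =ᵐ[μ.prod ν]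
      fun z => ∑ k, φ k z.1 * (h k z.2 * ∫ s, star (φ k s) * f (s, z.2) ∂μ) := by
  have hterm (k : ι) : ∀ᵐ z ∂μ.prod ν,
      tensorLp 𝕜 μ ν (hφ k).toLp (D k (((tensorLp 𝕜 μ ν (hφ k).toLp)†) f)) z =
        φ k z.1 * (h k z.2 * ∫ s, star (φ k s) * f (s, z.2) ∂μ) := by
    have hcongr (y : Y) : ∫ s, star ((hφ k).toLp (φ k) s) * f (s, y) ∂μ =
        ∫ s, star (φ k s) * f (s, y) ∂μ :=
      integral_congr_ae ((hφ k).coeFn_toLp.mono fun s hs => by simp only [hs])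
    filter_upwards [coeFn_tensorLp (hφ k).toLp (D k (((tensorLp 𝕜 μ ν (hφ k).toLp)†) f)),
      Measure.quasiMeasurePreserving_fst.ae (hφ k).coeFn_toLp,
      Measure.quasiMeasurePreserving_snd.ae (hD k (((tensorLp 𝕜 μ ν (hφ k).toLp)†) f)),
      Measure.quasiMeasurePreserving_snd.ae (coeFn_adjoint_tensorLp (hφ k).toLp f)]
      with z htensor hφz hDz hadj
    rw [htensor, hφz, hDz, hadj, hcongr]
  rw [partialOp_apply]
  filter_upwards [Lp.coeFn_fun_finsetSum Finset.univ fun k =>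
    tensorLp 𝕜 μ ν (hφ k).toLp (D k (((tensorLp 𝕜 μ ν (hφ k).toLp)†) f)),
    Filter.eventually_all.2 hterm] with z hsum hz
  simp only [hsum, hz]

theorem coeFn_partialOp_flip_tensorLp [SigmaFinite μ] [SFinite ν] (hψ : ∀ k, MemLp (ψ k) 2 ν)
    {C : κ → Lp 𝕜 2 μ →L[𝕜] Lp 𝕜 2 μ} (hC : ∀ k g, C k g =ᵐ[μ] fun x => p k x * g x)
    (f : Lp 𝕜 2 (μ.prod ν)) :
    partialOp (tensorLp 𝕜 μ ν).flip (fun k => (hψ k).toLp) C f =ᵐ[μ.prod ν]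
      fun z => ∑ k, p k z.1 * ψ k z.2 * ∫ t, star (ψ k t) * f (z.1, t) ∂ν := by
  have hterm (k : κ) : ∀ᵐ z ∂μ.prod ν,
      (tensorLp 𝕜 μ ν).flip (hψ k).toLp (C k ((((tensorLp 𝕜 μ ν).flip (hψ k).toLp)†) f)) z =
        p k z.1 * ψ k z.2 * ∫ t, star (ψ k t) * f (z.1, t) ∂ν := by
    have hcongr (x : X) : ∫ t, star ((hψ k).toLp (ψ k) t) * f (x, t) ∂ν =
        ∫ t, star (ψ k t) * f (x, t) ∂ν :=
      integral_congr_ae ((hψ k).coeFn_toLp.mono fun t ht => by simp only [ht])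
    filter_upwards [coeFn_tensorLp (C k ((((tensorLp 𝕜 μ ν).flip (hψ k).toLp)†) f)) (hψ k).toLp,
      Measure.quasiMeasurePreserving_snd.ae (hψ k).coeFn_toLp,
      Measure.quasiMeasurePreserving_fst.ae (hC k ((((tensorLp 𝕜 μ ν).flip (hψ k).toLp)†) f)),
      Measure.quasiMeasurePreserving_fst.ae (coeFn_adjoint_flip_tensorLp (hψ k).toLp f)]
      with z htensor hψz hCz hadj
    rw [ContinuousLinearMap.flip_apply, htensor, hψz, hCz, hadj, hcongr, mul_right_comm]
  rw [partialOp_apply]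
  filter_upwards [Lp.coeFn_fun_finsetSum Finset.univ fun k =>
    (tensorLp 𝕜 μ ν).flip (hψ k).toLp (C k ((((tensorLp 𝕜 μ ν).flip (hψ k).toLp)†) f)),
    Filter.eventually_all.2 hterm] with z hsum hz
  simp only [hsum, hz]

theorem eq_partialOp_tensorLp_of_ae_eq_integral [SFinite μ] [SigmaFinite ν]
    (hφ : ∀ k, MemLp (φ k) 2 μ) (hh : ∀ k, MemLp (h k) ∞ ν)
    {T : Lp 𝕜 2 (μ.prod ν) →L[𝕜] Lp 𝕜 2 (μ.prod ν)}
    (hT : ∀ f, ∀ᵐ z ∂μ.prod ν,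
      T f z = ∫ s, (∑ k, φ k z.1 * star (φ k s) * h k z.2) * f (s, z.2) ∂μ) :
    T = partialOp (tensorLp 𝕜 μ ν) (fun k => (hφ k).toLp) (fun k => mulLp (hh k)) := by
  ext1 f
  apply Lp.ext
  filter_upwards [hT f, coeFn_partialOp_tensorLp hφ (fun k => coeFn_mulLp (hh k)) f,
    Measure.quasiMeasurePreserving_snd.ae (ae_memLp_two_prodMk_right (Lp.memLp f))]
    with z hTz hpartial hslice
  rw [hTz, hpartial]
  simp_rw [mul_right_comm _ (star _), integral_sum_mul_star_mul hφ hslice, mul_assoc]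

theorem eq_partialOp_flip_tensorLp_of_ae_eq_integral [SigmaFinite μ] [SFinite ν]
    (hψ : ∀ k, MemLp (ψ k) 2 ν) (hp : ∀ k, MemLp (p k) ∞ μ)
    {T : Lp 𝕜 2 (μ.prod ν) →L[𝕜] Lp 𝕜 2 (μ.prod ν)}
    (hT : ∀ f, ∀ᵐ z ∂μ.prod ν,
      T f z = ∫ t, (∑ k, p k z.1 * ψ k z.2 * star (ψ k t)) * f (z.1, t) ∂ν) :
    T = partialOp (tensorLp 𝕜 μ ν).flip (fun k => (hψ k).toLp) (fun k => mulLp (hp k)) := by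
  ext1 f
  apply Lp.ext
  filter_upwards [hT f, coeFn_partialOp_flip_tensorLp hψ (fun k => coeFn_mulLp (hp k)) f,
    Measure.quasiMeasurePreserving_fst.ae (ae_memLp_two_prodMk_left (Lp.memLp f))]
    with z hTz hpartial hslice
  rw [hTz, hpartial, integral_sum_mul_star_mul hψ hslice]

end PartialIntegralOperator

section Evaluation

variable {𝕜 X Y ι κ : Type*} [RCLike 𝕜] {mX : MeasurableSpace X} {mY : MeasurableSpace Y}
  {μ : Measure X} {ν : Measure Y}
  {φ : ι → X → 𝕜} {ψ : κ → Y → 𝕜} {h : ι → Y → 𝕜} {p : κ → X → 𝕜}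

theorem inner_toLp_eq_integral {u : X → 𝕜} (hu : MemLp u 2 μ) {g : Lp 𝕜 2 μ} {g' : X → 𝕜}
    (hg : g =ᵐ[μ] g') : ⟪hu.toLp, g⟫_𝕜 = ∫ x, g' x * star (u x) ∂μ := by
  rw [L2.inner_def]
  refine integral_congr_ae ?_
  filter_upwards [hu.coeFn_toLp, hg] with x hux hgx
  rw [hux, hgx, RCLike.inner_apply, RCLike.star_def]

theorem orthonormal_toLp [DecidableEq ι] (hφ : ∀ k, MemLp (φ k) 2 μ)
    (hON : ∀ i j, ∫ x, star (φ i x) * φ j x ∂μ = if i = j then 1 else 0) :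
    Orthonormal 𝕜 fun k => (hφ k).toLp := by
  refine orthonormal_iff_ite.2 fun i j => ?_
  simp_rw [inner_toLp_eq_integral (hφ i) (hφ j).coeFn_toLp, mul_comm (φ j _), hON]

theorem sliceFunctional_tensorLp_apply [SigmaFinite μ] [SFinite ν] (hφ : ∀ k, MemLp (φ k) 2 μ)
    (hψ : ∀ k, MemLp (ψ k) 2 ν) (hp : ∀ k, MemLp (p k) ∞ μ) (ω : κ × ι)
    {f : Lp 𝕜 2 (μ.prod ν)} {g : X → Y → 𝕜} (hfg : f =ᵐ[μ.prod ν] fun z => g z.1 z.2) :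
    sliceFunctional (tensorLp 𝕜 μ ν) (fun k => (hφ k).toLp) (fun k => (hψ k).toLp)
        (fun k => mulLp (hp k)) ω f =
      ∫ x, (∫ y, g x y * (p ω.1 x * star (φ ω.2 x) * star (ψ ω.1 y)) ∂ν) ∂μ := by
  have hslice : mulLp (hp ω.1) ((((tensorLp 𝕜 μ ν).flip (hψ ω.1).toLp)†) f) =ᵐ[μ]
      fun x => p ω.1 x * ∫ y, star (ψ ω.1 y) * g x y ∂ν := by
    filter_upwards [coeFn_mulLp (hp ω.1) ((((tensorLp 𝕜 μ ν).flip (hψ ω.1).toLp)†) f),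
      coeFn_adjoint_flip_tensorLp (hψ ω.1).toLp f, Measure.ae_ae_of_ae_prod hfg]
      with x hmul hadj hfgx
    rw [hmul, hadj]
    congr 1
    refine integral_congr_ae ?_
    filter_upwards [(hψ ω.1).coeFn_toLp, hfgx] with y hψy hgy
    rw [hψy, hgy]
  refine (inner_toLp_eq_integral (hφ ω.2) hslice).trans ?_
  simp_rw [mul_right_comm, ← integral_const_mul]
  refine integral_congr_ae (.of_forall fun x => integral_congr_ae (.of_forall fun y => ?_))
  ring

variable [Fintype ι] [Fintype κ]

theorem eq_smul_partialOp_tensorLp_mul_resolvent [SFinite μ] [SigmaFinite ν] {lam : 𝕜}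
    (hlam0 : lam ≠ 0) (hφ : ∀ k, MemLp (φ k) 2 μ) (hh : ∀ k, MemLp (h k) ∞ ν)
    (hlam : ∀ k, lam ∉ spectrum 𝕜 (mulLp (hh k)))
    {S : Lp 𝕜 2 (μ.prod ν) →L[𝕜] Lp 𝕜 2 (μ.prod ν)}
    (hS : ∀ f, ∀ᵐ z ∂μ.prod ν, S f z = ∑ k, (h k z.2 / (1 - lam⁻¹ * h k z.2)) *
      (φ k z.1 * ∫ s, star (φ k s) * f (s, z.2) ∂μ)) :
    S = lam • partialOp (tensorLp 𝕜 μ ν) (fun k => (hφ k).toLp)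
      (fun k => mulLp (hh k) * resolvent (mulLp (hh k)) lam) := by
  have hdiv (w : 𝕜) : w / (1 - lam⁻¹ * w) = lam * (w / (lam - w)) := by
    rw [← mul_div_mul_left w _ hlam0, mul_sub, mul_inv_cancel_left₀ hlam0, mul_one, mul_div_assoc]
  ext1 f
  apply Lp.ext
  filter_upwards [hS f, Lp.coeFn_smul lam (partialOp (tensorLp 𝕜 μ ν) (fun k => (hφ k).toLp)
      (fun k => mulLp (hh k) * resolvent (mulLp (hh k)) lam) f),
    coeFn_partialOp_tensorLp hφ (fun k => coeFn_mulLp_mul_resolvent (hh k) (hlam k)) f]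
    with z hSz hsmul hpartial
  rw [hSz, smul_apply, hsmul, Pi.smul_apply, hpartial, smul_eq_mul, Finset.mul_sum]
  refine Finset.sum_congr rfl fun k _ => ?_
  rw [hdiv]
  ring

theorem coeFn_smul_resolvent_tensorLp [SigmaFinite μ] [SigmaFinite ν] {lam : 𝕜}
    (hψ : ∀ k, MemLp (ψ k) 2 ν) (hON : Orthonormal 𝕜 fun k => (hψ k).toLp)
    (hp : ∀ k, MemLp (p k) ∞ μ)
    (hlam : lam ∉ spectrum 𝕜
      (partialOp (tensorLp 𝕜 μ ν).flip (fun k => (hψ k).toLp) (fun k => mulLp (hp k))))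
    {u : X → 𝕜} (hu : MemLp u 2 μ) {v : Lp 𝕜 2 ν} {v' : Y → 𝕜} (hv : v =ᵐ[ν] v') :
    (lam • resolvent (partialOp (tensorLp 𝕜 μ ν).flip (fun k => (hψ k).toLp)
        (fun k => mulLp (hp k))) lam (tensorLp 𝕜 μ ν hu.toLp v) : Lp 𝕜 2 (μ.prod ν)) =ᵐ[μ.prod ν]
      fun z => u z.1 * (v' z.2 + ∑ i, (p i z.1 * ψ i z.2 / (lam - p i z.1)) *
        ∫ ξ, v' ξ * star (ψ i ξ) ∂ν) := by
  have hflip := (isInnerTensor_tensorLp (𝕜 := 𝕜) (μ := μ) (ν := ν)).flip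
  have hmul (i : κ) := coeFn_mulLp_mul_resolvent (hp i)
    (fun hi => hlam (hflip.spectrum_subset_spectrum_partialOp hON _ i hi))
  rw [hflip.smul_resolvent_partialOp_apply hON hlam]
  filter_upwards [Lp.coeFn_add (tensorLp 𝕜 μ ν hu.toLp v) (partialOp (tensorLp 𝕜 μ ν).flip
      (fun k => (hψ k).toLp) (fun k => mulLp (hp k) * resolvent (mulLp (hp k)) lam)
      (tensorLp 𝕜 μ ν hu.toLp v)),
    coeFn_partialOp_flip_tensorLp hψ hmul (tensorLp 𝕜 μ ν hu.toLp v),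
    coeFn_tensorLp hu.toLp v, Measure.quasiMeasurePreserving_fst.ae hu.coeFn_toLp,
    Measure.quasiMeasurePreserving_snd.ae hv,
    Measure.quasiMeasurePreserving_fst.ae (Measure.ae_ae_of_ae_prod (coeFn_tensorLp hu.toLp v))]
    with z hadd hpartial htensor hz hvz hslice
  have hint (i : κ) : ∫ t, star (ψ i t) * tensorLp 𝕜 μ ν hu.toLp v (z.1, t) ∂ν =
      u z.1 * ∫ ξ, v' ξ * star (ψ i ξ) ∂ν := by
    rw [← integral_const_mul]
    refine integral_congr_ae ?_
    filter_upwards [hslice, hv] with t ht hvt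
    rw [ht, hvt, hz]
    ring
  rw [hadd, Pi.add_apply, hpartial, htensor, hz, hvz, mul_add, Finset.mul_sum]
  simp_rw [hint]
  congr 1
  refine Finset.sum_congr rfl fun i _ => ?_
  ring

end Evaluation

section InfiniteDimensional

variable {𝕜 : Type*} [RCLike 𝕜] {μ : Measure ℝ} {K : Set ℝ}

theorem memLp_polynomial_eval_restrict [IsFiniteMeasureOnCompacts μ] (hK : IsCompact K) (p : ℝ≥0∞)
    (q : Polynomial 𝕜) : MemLp (fun x : ℝ => q.eval (x : 𝕜)) p (μ.restrict K) := by
  have hcont : Continuous fun x : ℝ => q.eval (x : 𝕜) := by fun_prop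
  have : IsFiniteMeasure (μ.restrict K) := isFiniteMeasure_restrict.2 hK.measure_ne_top
  obtain ⟨C, hC⟩ := hK.exists_bound_of_continuousOn hcont.continuousOn
  exact .of_bound hcont.aestronglyMeasurable C (ae_restrict_of_forall_mem hK.measurableSet hC)

theorem eq_zero_of_ae_eval_eq_zero [NullSingletonClass μ] (hμ : μ ≠ 0) {q : Polynomial 𝕜}
    (hq : ∀ᵐ x : ℝ ∂μ, q.eval (x : 𝕜) = 0) : q = 0 := by
  by_contra hq0
  have hroots : {x : ℝ | q.IsRoot (x : 𝕜)}.Finite :=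
    (q.finite_setOfPred_isRoot hq0).preimage RCLike.ofReal_injective.injOn
  refine hμ (ae_eq_bot.1 (Filter.eventually_false_iff_eq_bot.1 ?_))
  filter_upwards [hq, hroots.countable.ae_notMem μ] with x hx hx' using hx' hx

variable (𝕜) in
theorem not_finiteDimensional_Lp_restrict [IsFiniteMeasureOnCompacts μ] [NullSingletonClass μ]
    (hK : IsCompact K) (hμK : μ K ≠ 0) (p : ℝ≥0∞) :
    ¬ FiniteDimensional 𝕜 (Lp 𝕜 p (μ.restrict K)) := by
  let evalLp : Polynomial 𝕜 →ₗ[𝕜] Lp 𝕜 p (μ.restrict K) :=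
    { toFun q := (memLp_polynomial_eval_restrict hK p q).toLp
      map_add' q r := by
        rw [← MemLp.toLp_add]
        simp only [Polynomial.eval_add]
        rfl
      map_smul' c q := by
        rw [RingHom.id_apply, ← MemLp.toLp_const_smul]
        simp only [Polynomial.eval_smul]
        rfl }
  have hinj : Function.Injective evalLp := by
    refine (injective_iff_map_eq_zero evalLp).2 fun q hq => ?_
    refine eq_zero_of_ae_eval_eq_zero (mt Measure.restrict_eq_zero.1 hμK) ?_
    exact (memLp_polynomial_eval_restrict hK p q).coeFn_toLp.symm.trans
      (Lp.eq_zero_iff_ae_eq_zero.1 hq)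
  exact fun _ => Polynomial.not_finite (Module.Finite.of_injective evalLp hinj)

end InfiniteDimensional

theorem not_finiteDimensional_Lp_muI {a b : ℝ} (hab : a < b) :
    ¬ FiniteDimensional ℂ (Lp ℂ 2 (muI a b)) :=
  not_finiteDimensional_Lp_restrict ℂ isCompact_Icc (by simpa using hab) 2

theorem zero_mem_spectrum_of_ae_eq_integral_muI {a b c d : ℝ} (hab : a < b) (hcd : c < d)
    {ι : Type*} [Fintype ι] {φ : ι → ℝ → ℂ} {h : ι → ℝ → ℂ} (hφ : ∀ k, MemLp (φ k) 2 (muI a b))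
    (hh : ∀ k, MemLp (h k) ∞ (muI c d))
    {T : Lp ℂ 2 ((muI a b).prod (muI c d)) →L[ℂ] Lp ℂ 2 ((muI a b).prod (muI c d))}
    (hT : ∀ f, ∀ᵐ z ∂(muI a b).prod (muI c d),
      T f z = ∫ s, (∑ k, φ k z.1 * star (φ k s) * h k z.2) * f (s, z.2) ∂(muI a b)) :
    0 ∈ spectrum ℂ T := by
  have : Nontrivial (Lp ℂ 2 (muI c d)) := not_subsingleton_iff_nontrivial.1 fun _ =>
    not_finiteDimensional_Lp_muI hcd inferInstance
  rw [eq_partialOp_tensorLp_of_ae_eq_integral hφ hh hT]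
  exact isInnerTensor_tensorLp.zero_mem_spectrum_partialOp (not_finiteDimensional_Lp_muI hab) _

theorem memLp_top_ofReal {X : Type*} {mX : MeasurableSpace X} {μ : Measure X} {g : X → ℝ}
    (hg : AEStronglyMeasurable g μ) (hbdd : ∃ C : ℝ, ∀ᵐ x ∂μ, |g x| ≤ C) :
    MemLp (fun x => (g x : ℂ)) ∞ μ := by
  obtain ⟨C, hC⟩ := hbdd
  exact (memLp_top_of_bound hg C hC).ofReal

section Equation

variable {𝕜 X Y ι κ : Type*} [RCLike 𝕜] {mX : MeasurableSpace X} {mY : MeasurableSpace Y}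
  {μ : Measure X} {ν : Measure Y} [SigmaFinite μ] [SigmaFinite ν]
  [Fintype ι] [DecidableEq ι] [Fintype κ] [DecidableEq κ]
  {φ : ι → X → 𝕜} {ψ : κ → Y → 𝕜} {h : ι → Y → 𝕜} {p : κ → X → 𝕜}

theorem statement16_general
    (hφL2 : ∀ k, MemLp (φ k) 2 μ)
    (hφON : ∀ i j, ∫ x, star (φ i x) * φ j x ∂μ = if i = j then 1 else 0)
    (hh : ∀ k, MemLp (h k) ∞ ν)
    (hψL2 : ∀ j, MemLp (ψ j) 2 ν)
    (hψON : ∀ i j, ∫ y, star (ψ i y) * ψ j y ∂ν = if i = j then 1 else 0)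
    (hp : ∀ j, MemLp (p j) ∞ μ)
    {T1 T2 : Lp 𝕜 2 (μ.prod ν) →L[𝕜] Lp 𝕜 2 (μ.prod ν)}
    (hT1 : ∀ f, ∀ᵐ z ∂μ.prod ν,
      T1 f z = ∫ s, (∑ k, φ k z.1 * star (φ k s) * h k z.2) * f (s, z.2) ∂μ)
    (hT2 : ∀ f, ∀ᵐ z ∂μ.prod ν,
      T2 f z = ∫ t, (∑ j, p j z.1 * ψ j z.2 * star (ψ j t)) * f (z.1, t) ∂ν)
    {P : ι → (Lp 𝕜 2 (μ.prod ν) →L[𝕜] Lp 𝕜 2 (μ.prod ν))}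
    (hP : ∀ k f, ∀ᵐ z ∂μ.prod ν, P k f z = φ k z.1 * ∫ s, star (φ k s) * f (s, z.2) ∂μ)
    {lam : 𝕜} (hlam0 : lam ≠ 0) (hlam : lam ∉ spectrum 𝕜 T1 ∪ spectrum 𝕜 T2)
    {S1 : Lp 𝕜 2 (μ.prod ν) →L[𝕜] Lp 𝕜 2 (μ.prod ν)}
    (hS1 : ∀ f, ∀ᵐ z ∂μ.prod ν,
      S1 f z = ∑ k, (h k z.2 / (1 - lam⁻¹ * h k z.2)) * P k f z)
    {W1 : Lp 𝕜 2 (μ.prod ν) →L[𝕜] Lp 𝕜 2 (μ.prod ν)}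
    (hW1 : (1 - lam⁻¹ • T2) * W1 = S1 * T2)
    {F : κ × ι → X → Y → 𝕜}
    (hF : ∀ ω x y, F ω x y =
      φ ω.2 x * (ψ ω.1 y * h ω.2 y / (lam - h ω.2 y) +
        ∑ i, (p i x * ψ i y / (lam - p i x)) *
          ∫ ξ, (h ω.2 ξ / (lam - h ω.2 ξ)) * ψ ω.1 ξ * star (ψ i ξ) ∂ν))
    {B : κ × ι → X → Y → 𝕜}
    (hB : ∀ ω s t, B ω s t = p ω.1 s * star (φ ω.2 s) * star (ψ ω.1 t))
    {Pmat : κ × ι → κ × ι → 𝕜}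
    (hPmat : ∀ ω ω', Pmat ω ω' = ∫ x, (∫ y, F ω x y * B ω' x y ∂ν) ∂μ)
    {Δ : 𝕜}
    (hΔ : Δ = Matrix.det (Matrix.of fun ω ω' : κ × ι =>
      Pmat ω ω' - if ω = ω' then lam else 0)) :
    (∃ f : Lp 𝕜 2 (μ.prod ν), f ≠ 0 ∧ f - (lam ^ 2)⁻¹ • W1 f = 0) ↔ Δ = 0 := by
  obtain rfl := eq_partialOp_tensorLp_of_ae_eq_integral hφL2 hh hT1
  obtain rfl := eq_partialOp_flip_tensorLp_of_ae_eq_integral hψL2 hp hT2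
  obtain ⟨hlam₁, hlam₂⟩ := not_or.1 hlam
  have hφ := orthonormal_toLp hφL2 hφON
  have hψ := orthonormal_toLp hψL2 hψON
  have hlam_h (k : ι) : lam ∉ spectrum 𝕜 (mulLp (hh k)) := fun hk =>
    hlam₁ (isInnerTensor_tensorLp.spectrum_subset_spectrum_partialOp hφ _ k hk)
  have hS1_partialOp := eq_smul_partialOp_tensorLp_mul_resolvent hlam0 hφL2 hh hlam_h (S := S1)
    fun f => by
      filter_upwards [hS1 f, Filter.eventually_all.2 (hP · f)] with z hSz hPz
      simp only [hSz, hPz]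
  rw [hS1_partialOp, smul_mul_assoc] at hW1
  have hD_ae (ω : κ × ι) : (mulLp (hh ω.2) * resolvent (mulLp (hh ω.2)) lam) (hψL2 ω.1).toLp =ᵐ[ν]
      fun y => h ω.2 y / (lam - h ω.2 y) * ψ ω.1 y := by
    filter_upwards [coeFn_mulLp_mul_resolvent (hh ω.2) (hlam_h ω.2) (hψL2 ω.1).toLp,
      (hψL2 ω.1).coeFn_toLp] with y hy hψy
    rw [hy, hψy]
  have hF_ae (ω : κ × ι) :=
    (coeFn_smul_resolvent_tensorLp hψL2 hψ hp hlam₂ (hφL2 ω.2) (hD_ae ω)).trans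
      (h := fun z => F ω z.1 z.2) (.of_forall fun z => by
        simp only [hF, mul_comm (ψ ω.1 z.2), mul_div_right_comm])
  rw [exists_ne_zero_sub_eq_zero_iff_det_eq_zero isInnerTensor_tensorLp hlam0 hlam₂ hW1, hΔ]
  simp_rw [sliceFunctional_tensorLp_apply hφL2 hψL2 hp _ (hF_ae _), hPmat, hB]

end Equation

theorem statement16
    (a b c d : ℝ) (hab : a < b) (hcd : c < d)
    (n : ℕ) (hn : 1 ≤ n)
    (φ : Fin n → ℝ → ℂ)
    (hφL2 : ∀ k, MemLp (φ k) 2 (muI a b))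
    (hφON : ∀ i j, ∫ x, star (φ i x) * φ j x ∂(muI a b) = if i = j then 1 else 0)
    (h : Fin n → ℝ → ℝ)
    (hhmeas : ∀ k, Measurable (h k))
    (hhbdd : ∀ k, ∃ C : ℝ, ∀ᵐ y ∂(muI c d), |h k y| ≤ C)
    (m : ℕ) (hm : 1 ≤ m)
    (ψ : Fin m → ℝ → ℂ)
    (hψL2 : ∀ j, MemLp (ψ j) 2 (muI c d))
    (hψON : ∀ i j, ∫ y, star (ψ i y) * ψ j y ∂(muI c d) = if i = j then 1 else 0)
    (p : Fin m → ℝ → ℝ)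
    (hpmeas : ∀ j, Measurable (p j))
    (hpbdd : ∀ j, ∃ C : ℝ, ∀ᵐ x ∂(muI a b), |p j x| ≤ C)
    (T1 T2 : Lp ℂ 2 ((muI a b).prod (muI c d)) →L[ℂ] Lp ℂ 2 ((muI a b).prod (muI c d)))
    (hT1sa : IsSelfAdjoint T1) (hT2sa : IsSelfAdjoint T2)
    (hT1 : ∀ f : Lp ℂ 2 ((muI a b).prod (muI c d)),
      ∀ᵐ z ∂((muI a b).prod (muI c d)),
        T1 f z = ∫ s, (∑ k, φ k z.1 * star (φ k s) * (h k z.2 : ℂ)) * f (s, z.2) ∂(muI a b))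
    (hT2 : ∀ f : Lp ℂ 2 ((muI a b).prod (muI c d)),
      ∀ᵐ z ∂((muI a b).prod (muI c d)),
        T2 f z = ∫ t, (∑ j, (p j z.1 : ℂ) * ψ j z.2 * star (ψ j t)) * f (z.1, t) ∂(muI c d))
    -- the orthogonal projections `P k`
    (P : Fin n → (Lp ℂ 2 ((muI a b).prod (muI c d)) →L[ℂ] Lp ℂ 2 ((muI a b).prod (muI c d))))
    (hP : ∀ k, ∀ f : Lp ℂ 2 ((muI a b).prod (muI c d)),
      ∀ᵐ z ∂((muI a b).prod (muI c d)),
        P k f z = φ k z.1 * ∫ s, star (φ k s) * f (s, z.2) ∂(muI a b))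
    -- the point lam in G = ℂ \ (σ(T₁) ∪ σ(T₂))
    (lam : ℂ) (hlam : lam ∉ spectrum ℂ T1 ∪ spectrum ℂ T2)
    -- the operator S₁(1/lam)
    (S1 : Lp ℂ 2 ((muI a b).prod (muI c d)) →L[ℂ] Lp ℂ 2 ((muI a b).prod (muI c d)))
    (hS1 : ∀ f : Lp ℂ 2 ((muI a b).prod (muI c d)),
      ∀ᵐ z ∂((muI a b).prod (muI c d)),
        S1 f z = ∑ k, ((h k z.2 : ℂ) / (1 - lam⁻¹ * (h k z.2 : ℂ))) * P k f z)
    -- the operator W₁(1/lam) = (E - (1/lam)T₂)⁻¹ S₁(1/lam) T₂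
    (W1 : Lp ℂ 2 ((muI a b).prod (muI c d)) →L[ℂ] Lp ℂ 2 ((muI a b).prod (muI c d)))
    (hW1 : (1 - lam⁻¹ • T2) * W1 = S1 * T2)
    -- the functions F_ω(x, y; lam) for ω = (k, j) ∈ Γ = {1,…,m} × {1,…,n}
    (F : Fin m × Fin n → ℝ → ℝ → ℂ)
    (hF : ∀ ω x y, F ω x y =
      φ ω.2 x * (ψ ω.1 y * (h ω.2 y : ℂ) / (lam - (h ω.2 y : ℂ)) +
        ∑ i, ((p i x : ℂ) * ψ i y / (lam - (p i x : ℂ))) *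
          ∫ ξ, ((h ω.2 ξ : ℂ) / (lam - (h ω.2 ξ : ℂ))) * ψ ω.1 ξ * star (ψ i ξ) ∂(muI c d)))
    -- the functions B_ω(s, t)
    (B : Fin m × Fin n → ℝ → ℝ → ℂ)
    (hB : ∀ ω s t, B ω s t = (p ω.1 s : ℂ) * star (φ ω.2 s) * star (ψ ω.1 t))
    -- the numbers Π_{ω,ω'}(lam)
    (Pmat : Fin m × Fin n → Fin m × Fin n → ℂ)
    (hPmat : ∀ ω ω', Pmat ω ω' =
      ∫ x, (∫ y, F ω x y * B ω' x y ∂(muI c d)) ∂(muI a b))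
    -- the determinant Δ(lam)
    (Δ : ℂ)
    (hΔ : Δ = Matrix.det
      (Matrix.of fun ω ω' : Fin m × Fin n => Pmat ω ω' - if ω = ω' then lam else 0)) :
    (∃ f : Lp ℂ 2 ((muI a b).prod (muI c d)),
      f ≠ 0 ∧ f - (lam ^ 2)⁻¹ • W1 f = 0) ↔ Δ = 0 := by
  have hh (k : Fin n) := memLp_top_ofReal (hhmeas k).aestronglyMeasurable (hhbdd k)
  have hp (j : Fin m) := memLp_top_ofReal (hpmeas j).aestronglyMeasurable (hpbdd j)
  have hlam0 : lam ≠ 0 := fun h0 =>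
    hlam (.inl (h0 ▸ zero_mem_spectrum_of_ae_eq_integral_muI hab hcd hφL2 hh hT1))
  exact statement16_general hφL2 hφON hh hψL2 hψON hp hT1 hT2 hP hlam0 hlam hS1 hW1 hF hB hPmat hΔ
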